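/- Let U(x,y) = (y·√(4x+(y−1)²) + y² + 2x − y)/(8x + 2(y−1)²) and V(x,y) = y/√(4x+(y−1)²), defined for real x, y with 4x + (y−1)² > 0. Then (U, V) satisfies the projective flow PDE for the vector field ϖ(x,y) = −4x² + 3xy, ϱ(x,y) = −2xy + y²: that is, U_x·(−4x² + 3xy − x) + U_y·(−2xy + y² − y) + U = 0 and V_x·(−4x² + 3xy − x) + V_y·(−2xy + y² − y) + V = 0 at every such point. -/

import Mathlib

/-- The first coordinate of the algebraic flow `Φ` with vector field `(-4x²+3xy) • (-2xy+y²)`. -/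
noncomputable def Ualg (x y : ℝ) : ℝ :=
  (y * Real.sqrt (4 * x + (y - 1) ^ 2) + y ^ 2 + 2 * x - y) / (8 * x + 2 * (y - 1) ^ 2)

/-- The second coordinate of the algebraic flow `Φ` with vector field `(-4x²+3xy) • (-2xy+y²)`. -/
noncomputable def Valg (x y : ℝ) : ℝ :=
  y / Real.sqrt (4 * x + (y - 1) ^ 2)

/-!
Let `W = (ϖ - x) ∂_x + (ϱ - y) ∂_y`, so that the projective flow PDE reads `W f = -f`. The
polynomials `y`, `D = 4x + (y - 1)²` and `P = y² + 2x - y` are Darboux polynomials of `W`: each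
satisfies `W f = k f` with a polynomial cofactor `k`, namely `y - 2x - 1`, `2y - 4x` and
`2y - 4x - 1` respectively. Cofactors subtract under division and are halved by the square root,
so `V = y / √D` and `P / D` both have cofactor `-1`, and hence so does `U = (V + P / D) / 2`.
-/

section Cofactor

variable {𝕜 E : Type*} [NontriviallyNormedField 𝕜] [NormedAddCommGroup E] [NormedSpace 𝕜 E]

/-- `f` is differentiable at `p` and its derivative along `v` is `k * f p`. When `v` is the value
at `p` of a vector field, this is the pointwise form of Darboux's relation with cofactor `k`. -/
def HasCofactorAt (f : E → 𝕜) (k : 𝕜) (v p : E) : Prop :=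
  ∃ f' : E →L[𝕜] 𝕜, HasFDerivAt f f' p ∧ f' v = k * f p

namespace HasCofactorAt

variable {f g : E → 𝕜} {k l : 𝕜} {v p : E}

theorem add (hf : HasCofactorAt f k v p) (hg : HasCofactorAt g k v p) :
    HasCofactorAt (fun q => f q + g q) k v p := by
  obtain ⟨f', hf', hfv⟩ := hf
  obtain ⟨g', hg', hgv⟩ := hg
  refine ⟨_, hf'.fun_add hg', ?_⟩
  rw [add_apply, hfv, hgv, mul_add]

theorem const_mul (hf : HasCofactorAt f k v p) (c : 𝕜) :
    HasCofactorAt (fun q => c * f q) k v p := by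
  obtain ⟨f', hf', hfv⟩ := hf
  refine ⟨_, hf'.const_mul c, ?_⟩
  rw [smul_apply, hfv, smul_eq_mul, mul_left_comm]

theorem mul (hf : HasCofactorAt f k v p) (hg : HasCofactorAt g l v p) :
    HasCofactorAt (fun q => f q * g q) (k + l) v p := by
  obtain ⟨f', hf', hfv⟩ := hf
  obtain ⟨g', hg', hgv⟩ := hg
  refine ⟨_, hf'.fun_mul hg', ?_⟩
  simp only [add_apply, smul_apply, smul_eq_mul, hfv, hgv]
  ring

theorem inv (hf : HasCofactorAt f k v p) (hfp : f p ≠ 0) :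
    HasCofactorAt (fun q => (f q)⁻¹) (-k) v p := by
  obtain ⟨f', hf', hfv⟩ := hf
  refine ⟨_, (hasDerivAt_inv hfp).comp_hasFDerivAt p hf', ?_⟩
  rw [smul_apply, hfv, smul_eq_mul]
  field_simp

theorem div (hf : HasCofactorAt f k v p) (hg : HasCofactorAt g l v p) (hgp : g p ≠ 0) :
    HasCofactorAt (fun q => f q / g q) (k - l) v p := by
  simpa only [div_eq_mul_inv, sub_eq_add_neg] using hf.mul (hg.inv hgp)

theorem sqrt {F : Type*} [NormedAddCommGroup F] [NormedSpace ℝ F] {f : F → ℝ} {k : ℝ} {v p : F}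
    (hf : HasCofactorAt f k v p) (hfp : f p ≠ 0) :
    HasCofactorAt (fun q => √(f q)) (k / 2) v p := by
  obtain ⟨f', hf', hfv⟩ := hf
  refine ⟨_, hf'.sqrt hfp, ?_⟩
  calc ((1 / (2 * √(f p))) • f') v = k / 2 * (f p / √(f p)) := by
        rw [smul_apply, hfv, smul_eq_mul]; ring
    _ = k / 2 * √(f p) := by rw [Real.div_sqrt]

theorem deriv_mul_add_deriv_mul {f : 𝕜 × 𝕜 → 𝕜} {a b x y : 𝕜}
    (hf : HasCofactorAt f k (a, b) (x, y)) :
    deriv (fun t => f (t, y)) x * a + deriv (fun t => f (x, t)) y * b = k * f (x, y) := by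
  obtain ⟨f', hf', hfv⟩ := hf
  have hx : HasDerivAt (fun t => f (t, y)) (f' (1, 0)) x :=
    hf'.comp_hasDerivAt x ((hasDerivAt_id x).prodMk (hasDerivAt_const x y))
  have hy : HasDerivAt (fun t => f (x, t)) (f' (0, 1)) y :=
    hf'.comp_hasDerivAt y ((hasDerivAt_const y x).prodMk (hasDerivAt_id y))
  have hab : (a, b) = a • ((1, 0) : 𝕜 × 𝕜) + b • ((0, 1) : 𝕜 × 𝕜) := by simp
  rw [hx.deriv, hy.deriv, ← hfv, hab, map_add, map_smul, map_smul, smul_eq_mul, smul_eq_mul,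
    mul_comm a, mul_comm b]

end HasCofactorAt

end Cofactor

section Polynomials

/-- The vector field `(ϖ - x, ϱ - y)` along which the projective flow PDE differentiates. -/
def flowField {R : Type*} [CommRing R] (p : R × R) : R × R :=
  (-4 * p.1 ^ 2 + 3 * p.1 * p.2 - p.1, -2 * p.1 * p.2 + p.2 ^ 2 - p.2)

/-- The polynomial `D` under the square root in `U` and `V`. -/
def radicand {R : Type*} [CommRing R] (p : R × R) : R :=
  4 * p.1 + (p.2 - 1) ^ 2

/-- The numerator `P` of the part of `U` free of square roots, in `U = (V + P / D) / 2`. -/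
def rationalNumerator {R : Type*} [CommRing R] (p : R × R) : R :=
  p.2 ^ 2 + 2 * p.1 - p.2

variable {𝕜 : Type*} [NontriviallyNormedField 𝕜] (p : 𝕜 × 𝕜)

theorem hasCofactorAt_snd_flowField :
    HasCofactorAt Prod.snd (p.2 - 2 * p.1 - 1) (flowField p) p := by
  refine ⟨_, hasFDerivAt_snd, ?_⟩
  simp only [flowField, ContinuousLinearMap.coe_snd']
  ring

theorem hasCofactorAt_radicand_flowField :
    HasCofactorAt radicand (2 * p.2 - 4 * p.1) (flowField p) p := by
  refine ⟨_, (hasFDerivAt_fst.const_mul 4).fun_add ((hasFDerivAt_snd.sub_const _).pow 2), ?_⟩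
  simp only [flowField, radicand, add_apply, smul_apply, ContinuousLinearMap.coe_fst',
    ContinuousLinearMap.coe_snd', smul_eq_mul, nsmul_eq_mul, Nat.cast_ofNat]
  ring

theorem hasCofactorAt_rationalNumerator_flowField :
    HasCofactorAt rationalNumerator (2 * p.2 - 4 * p.1 - 1) (flowField p) p := by
  refine ⟨_, ((hasFDerivAt_snd.pow 2).fun_add (hasFDerivAt_fst.const_mul 2)).fun_sub
    hasFDerivAt_snd, ?_⟩
  simp only [flowField, rationalNumerator, add_apply, sub_apply, smul_apply,
    ContinuousLinearMap.coe_fst', ContinuousLinearMap.coe_snd', smul_eq_mul, nsmul_eq_mul,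
    Nat.cast_ofNat]
  ring

end Polynomials

theorem Ualg_eq (x y : ℝ) :
    Ualg x y = 2⁻¹ * (Valg x y + rationalNumerator (x, y) / radicand (x, y)) := by
  have hnum : y * √(radicand (x, y)) + y ^ 2 + 2 * x - y =
      y * √(radicand (x, y)) + rationalNumerator (x, y) := by rw [rationalNumerator]; ring
  have hden : 8 * x + 2 * (y - 1) ^ 2 = 2 * radicand (x, y) := by rw [radicand]; ring
  calc Ualg x y = (y * √(radicand (x, y)) + rationalNumerator (x, y)) / (2 * radicand (x, y)) := by
        rw [← hnum, ← hden, Ualg, radicand]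
    _ = 2⁻¹ * (y * (√(radicand (x, y)) / radicand (x, y)) +
          rationalNumerator (x, y) / radicand (x, y)) := by ring
    _ = 2⁻¹ * (Valg x y + rationalNumerator (x, y) / radicand (x, y)) := by
        rw [Real.sqrt_div_self, ← div_eq_mul_inv, Valg, radicand]

section Flow

variable {p : ℝ × ℝ}

theorem hasCofactorAt_Valg_flowField (hp : 0 < radicand p) :
    HasCofactorAt (fun q => Valg q.1 q.2) (-1) (flowField p) p := by
  have hV := (hasCofactorAt_snd_flowField p).div
    ((hasCofactorAt_radicand_flowField p).sqrt hp.ne') (Real.sqrt_pos.2 hp).ne'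
  have hk : p.2 - 2 * p.1 - 1 - (2 * p.2 - 4 * p.1) / 2 = -1 := by ring
  rwa [hk] at hV

theorem hasCofactorAt_Ualg_flowField (hp : 0 < radicand p) :
    HasCofactorAt (fun q => Ualg q.1 q.2) (-1) (flowField p) p := by
  have hR := (hasCofactorAt_rationalNumerator_flowField p).div
    (hasCofactorAt_radicand_flowField p) hp.ne'
  rw [sub_sub_cancel_left] at hR
  simpa only [Ualg_eq] using ((hasCofactorAt_Valg_flowField hp).add hR).const_mul 2⁻¹

end Flow

/-- `(U,V)` satisfies the projective flow PDE for the vector field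
`ϖ(x,y) = -4x² + 3xy`, `ϱ(x,y) = -2xy + y²`. -/
theorem alg_flow_satisfies_PDE (x y : ℝ) (h : 4 * x + (y - 1) ^ 2 > 0) :
    deriv (fun t => Ualg t y) x * (-4 * x ^ 2 + 3 * x * y - x) +
      deriv (fun t => Ualg x t) y * (-2 * x * y + y ^ 2 - y) + Ualg x y = 0 ∧
    deriv (fun t => Valg t y) x * (-4 * x ^ 2 + 3 * x * y - x) +
      deriv (fun t => Valg x t) y * (-2 * x * y + y ^ 2 - y) + Valg x y = 0 := by
  have hU := (hasCofactorAt_Ualg_flowField (p := (x, y)) h).deriv_mul_add_deriv_mul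
  have hV := (hasCofactorAt_Valg_flowField (p := (x, y)) h).deriv_mul_add_deriv_mul
  rw [neg_one_mul] at hU hV
  exact ⟨eq_neg_iff_add_eq_zero.1 hU, eq_neg_iff_add_eq_zero.1 hV⟩
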